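/- Let n ≥ 2, r > 0, let U be a nonempty relatively open subset of the sphere rS^{n-1} = {x ∈ ℝⁿ : |x| = r}, and let v_1, …, v_m be unit vectors with rS^{n-1} ⊆ ∪_{i=1}^m σ_{v_i}(U). Then there exist δ_1, …, δ_m > 0 such that for all unit vectors u_1, …, u_m with |u_i − v_i| < δ_i for each i, one still has rS^{n-1} ⊆ ∪_{i=1}^m σ_{u_i}(U). -/

import Mathlib

open MeasureTheory Filter Metric

/-- Orthogonal projection of `ℝⁿ` onto the hyperplane `u^⊥` through the origin. -/
noncomputable def steinerProj {n : ℕ} (u : EuclideanSpace ℝ (Fin n)) :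
    EuclideanSpace ℝ (Fin n) → EuclideanSpace ℝ (Fin n) :=
  fun z => ((Submodule.orthogonalProjection (Submodule.span ℝ {u})ᗮ) z : EuclideanSpace ℝ (Fin n))

/-- `ℓ_{E,u}(x')` : the one-dimensional Lebesgue measure of `{t : x' + t u ∈ E}`. -/
noncomputable def steinerLen {n : ℕ} (u : EuclideanSpace ℝ (Fin n))
    (E : Set (EuclideanSpace ℝ (Fin n))) (x' : EuclideanSpace ℝ (Fin n)) : ℝ :=
  (volume {t : ℝ | x' + t • u ∈ E}).toReal

/-- Steiner symmetrization of `E` about the hyperplane `u^⊥`: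
`S_u E = {x' + t u : x' ∈ π_u(E), |t| ≤ ℓ_{E,u}(x')/2}`. -/
noncomputable def steiner {n : ℕ} (u : EuclideanSpace ℝ (Fin n))
    (E : Set (EuclideanSpace ℝ (Fin n))) : Set (EuclideanSpace ℝ (Fin n)) :=
  {x | ∃ x' ∈ steinerProj u '' E, ∃ t : ℝ, |t| ≤ steinerLen u E x' / 2 ∧ x = x' + t • u}

/-- The last standard basis vector `e_n` of `ℝⁿ` (junk value `0` if `n = 0`). -/
noncomputable def lastDir (n : ℕ) : EuclideanSpace ℝ (Fin n) :=
  if h : n = 0 then 0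
  else EuclideanSpace.single ⟨n - 1, Nat.sub_lt (Nat.pos_of_ne_zero h) one_pos⟩ 1

/-- `max_{x ∈ E} |x|` for a (nonempty compact) set `E ⊆ ℝⁿ`. -/
noncomputable def maxNorm {n : ℕ} (E : Set (EuclideanSpace ℝ (Fin n))) : ℝ :=
  sSup ((fun x => ‖x‖) '' E)

/-- Reflection `σ_v(x) = x - 2(x·v)v` of `ℝⁿ` across the hyperplane `v^⊥`. -/
noncomputable def reflHyp {n : ℕ} (v : EuclideanSpace ℝ (Fin n))
    (x : EuclideanSpace ℝ (Fin n)) : EuclideanSpace ℝ (Fin n) :=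
  x - (2 * (inner ℝ x v : ℝ)) • v

/-!
Compactness gives the cover of the sphere by the sets `σ_{v_i}(U)` a Lebesgue number `ε`. Given
a point `x` of the sphere, let `i` be the index that the Lebesgue number provides for the ball
`B(x, ε)`, and write `x = σ_{u_i}(z)` with `|z| = r`. Replacing `u_i` by `v_i` moves this point by
at most `4r|u_i - v_i|`. If this is less than `ε`, then `σ_{v_i}(z) ∈ σ_{v_i}(U)`, so `z ∈ U` by
injectivity and `x ∈ σ_{u_i}(U)`.
-/

theorem exists_pos_forall_subset_iUnion_image_of_dist_lt {ι X Y : Type*} [TopologicalSpace X]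
    [PseudoMetricSpace Y] {K : Set Y} (hK : IsCompact K) {e : ι → X → Y}
    (he : ∀ i, Topology.IsOpenEmbedding (e i)) {V : ι → Set X} (hV : ∀ i, IsOpen (V i))
    (hKV : K ⊆ ⋃ i, e i '' V i) :
    ∃ ε > 0, ∀ (A : Set X) (f : ι → X → Y), (∀ i, K ⊆ f i '' A) →
      (∀ i, ∀ z ∈ A, dist (e i z) (f i z) < ε) → K ⊆ ⋃ i, f i '' (V i ∩ A) := by
  obtain ⟨ε, hε, hball⟩ :=
    lebesgue_number_lemma_of_metric hK (fun i => (he i).isOpenMap _ (hV i)) hKV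
  refine ⟨ε, hε, fun A f hf hdist x hx => ?_⟩
  obtain ⟨i, hi⟩ := hball x hx
  obtain ⟨z, hzA, rfl⟩ := hf i hx
  have hzV : z ∈ V i := (he i).injective.mem_set_image.mp (hi (hdist i z hzA))
  exact Set.mem_iUnion.mpr ⟨i, z, ⟨hzV, hzA⟩, rfl⟩

section InnerProductSpace

open Submodule

variable {E : Type*} [NormedAddCommGroup E] [InnerProductSpace ℝ E]

theorem reflection_orthogonal_span_singleton_apply {v : E} (hv : ‖v‖ = 1) (x : E) :
    (ℝ ∙ v)ᗮ.reflection x = x - (2 * inner ℝ x v) • v := by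
  rw [reflection_orthogonal_apply, reflection_apply, starProjection_unit_singleton ℝ hv,
    real_inner_comm]
  module

theorem norm_reflection_sub_reflection_le {u v : E} (hu : ‖u‖ = 1) (hv : ‖v‖ = 1) (x : E) :
    ‖(ℝ ∙ u)ᗮ.reflection x - (ℝ ∙ v)ᗮ.reflection x‖ ≤ 4 * ‖x‖ * ‖u - v‖ := by
  have hsplit : (ℝ ∙ u)ᗮ.reflection x - (ℝ ∙ v)ᗮ.reflection x =
      -((2 * inner ℝ x (u - v)) • u + (2 * inner ℝ x v) • (u - v)) := by
    simp only [reflection_orthogonal_span_singleton_apply hu,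
      reflection_orthogonal_span_singleton_apply hv, inner_sub_right]
    module
  have hinner (w : E) : |2 * inner ℝ x w| ≤ 2 * (‖x‖ * ‖w‖) := by
    rw [abs_mul, abs_two]
    gcongr
    exact abs_real_inner_le_norm x w
  calc ‖(ℝ ∙ u)ᗮ.reflection x - (ℝ ∙ v)ᗮ.reflection x‖
      ≤ |2 * inner ℝ x (u - v)| * ‖u‖ + |2 * inner ℝ x v| * ‖u - v‖ := by
        rw [hsplit, norm_neg, ← Real.norm_eq_abs, ← Real.norm_eq_abs, ← norm_smul, ← norm_smul]
        exact norm_add_le _ _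
    _ ≤ 2 * (‖x‖ * ‖u - v‖) * ‖u‖ + 2 * (‖x‖ * ‖v‖) * ‖u - v‖ := by
        gcongr <;> exact hinner _
    _ = 4 * ‖x‖ * ‖u - v‖ := by rw [hu, hv]; ring

theorem stmt12_general [ProperSpace E] {ι : Type*} (r : ℝ) (U : Set E)
    (hUopen : ∃ V : Set E, IsOpen V ∧ U = V ∩ sphere (0 : E) r)
    (v : ι → E) (hv : ∀ i, ‖v i‖ = 1)
    (hcover : sphere (0 : E) r ⊆ ⋃ i, (ℝ ∙ v i)ᗮ.reflection '' U) :
    ∃ δ > 0, ∀ u : ι → E, (∀ i, ‖u i‖ = 1) → (∀ i, ‖u i - v i‖ < δ) →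
      sphere (0 : E) r ⊆ ⋃ i, (ℝ ∙ u i)ᗮ.reflection '' U := by
  obtain ⟨V, hV, rfl⟩ := hUopen
  have hcoverV : sphere (0 : E) r ⊆ ⋃ i, (ℝ ∙ v i)ᗮ.reflection '' V :=
    hcover.trans <| Set.iUnion_mono fun i => Set.image_mono Set.inter_subset_left
  obtain ⟨ε, hε, hstable⟩ := exists_pos_forall_subset_iUnion_image_of_dist_lt
    (isCompact_sphere 0 r) (fun i => (ℝ ∙ v i)ᗮ.reflection.toHomeomorph.isOpenEmbedding)
    (fun _ => hV) hcoverV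
  obtain ⟨δ, hδ, hδε⟩ := exists_pos_mul_lt hε (4 * r)
  refine ⟨δ, hδ, fun u hu huv => ?_⟩
  have hsurj (i : ι) : sphere (0 : E) r ⊆ (ℝ ∙ u i)ᗮ.reflection '' sphere 0 r := by
    rw [LinearIsometryEquiv.image_sphere, map_zero]
  have hclose (i : ι) (z : E) (hz : z ∈ sphere (0 : E) r) :
      dist ((ℝ ∙ v i)ᗮ.reflection z) ((ℝ ∙ u i)ᗮ.reflection z) < ε := by
    rw [mem_sphere_zero_iff_norm] at hz
    calc dist ((ℝ ∙ v i)ᗮ.reflection z) ((ℝ ∙ u i)ᗮ.reflection z)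
        = ‖(ℝ ∙ u i)ᗮ.reflection z - (ℝ ∙ v i)ᗮ.reflection z‖ := by
          rw [dist_comm, dist_eq_norm]
      _ ≤ 4 * ‖z‖ * ‖u i - v i‖ := norm_reflection_sub_reflection_le (hu i) (hv i) z
      _ ≤ 4 * ‖z‖ * δ := by gcongr; exact (huv i).le
      _ < ε := by rwa [hz]
  exact hstable (sphere 0 r) (fun i => (ℝ ∙ u i)ᗮ.reflection) hsurj hclose

end InnerProductSpace

theorem reflHyp_eq_reflection {n : ℕ} {v : EuclideanSpace ℝ (Fin n)} (hv : ‖v‖ = 1) :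
    reflHyp v = (ℝ ∙ v)ᗮ.reflection :=
  funext fun x => (reflection_orthogonal_span_singleton_apply hv x).symm

/-- Stability of the covering of the sphere by reflected caps: if `σ_{v_1}(U), …, σ_{v_m}(U)`
cover `rS^{n-1}`, then for unit vectors `u_i` sufficiently close to `v_i` the sets
`σ_{u_1}(U), …, σ_{u_m}(U)` still cover `rS^{n-1}`. -/
theorem stmt12 (n : ℕ) (hn : 2 ≤ n) (r : ℝ) (hr : 0 < r)
    (U : Set (EuclideanSpace ℝ (Fin n))) (hUne : U.Nonempty)
    (hUopen : ∃ V : Set (EuclideanSpace ℝ (Fin n)),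
      IsOpen V ∧ U = V ∩ sphere (0 : EuclideanSpace ℝ (Fin n)) r)
    (m : ℕ) (v : Fin m → EuclideanSpace ℝ (Fin n)) (hv : ∀ i, ‖v i‖ = 1)
    (hcover : sphere (0 : EuclideanSpace ℝ (Fin n)) r ⊆ ⋃ i, reflHyp (v i) '' U) :
    ∃ δ : Fin m → ℝ, (∀ i, 0 < δ i) ∧
      ∀ u : Fin m → EuclideanSpace ℝ (Fin n),
        (∀ i, ‖u i‖ = 1) → (∀ i, ‖u i - v i‖ < δ i) →
        sphere (0 : EuclideanSpace ℝ (Fin n)) r ⊆ ⋃ i, reflHyp (u i) '' U := by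
  simp only [reflHyp_eq_reflection (hv _)] at hcover
  obtain ⟨δ, hδ, hstable⟩ := stmt12_general r U hUopen v hv hcover
  exact ⟨fun _ => δ, fun _ => hδ, fun u hu huv => by
    simpa only [reflHyp_eq_reflection (hu _)] using hstable u hu huv⟩
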